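/- arXiv:2011.06940 — 3 statements merged into one kernel-verified Lean document; each statement's English description precedes it below -/
import Mathlib

section
/- Let c : ℕ and let α β : ℕ → Prop. Suppose there is exactly one index k ≤ c such that α k holds. Then the disjunction of β with stopping condition α, evaluated at 0, is equivalent to the ordinary guarded disjunction: D 0 ↔ (∃ i, i ≤ c ∧ α i ∧ β i). -/
/-- The disjunction of `β` with stopping condition `α`, defined by backwards
recursion on `j ≤ c`: `D c = α c ∧ β c`, and for `j < c`,
`D j = (α j ∧ β j) ∨ (¬ α j ∧ D (j+1))`. -/
def stopDisj (c : ℕ) (α β : ℕ → Prop) (j : ℕ) : Prop :=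
  if j < c then (α j ∧ β j) ∨ (¬ α j ∧ stopDisj c α β (j + 1))
  else (α j ∧ β j)
termination_by c - j
decreasing_by omega

/-- Before the unique stopping index `k` the recursion only passes to the next index, and at `k`
it stops; so started anywhere at or below `k` it returns `β k`. -/
theorem stopDisj_iff_of_le {c k : ℕ} {α β : ℕ → Prop} (hkc : k ≤ c) (hk : α k)
    (huniq : ∀ i, i ≤ c → α i → i = k) {j : ℕ} (hj : j ≤ k) :
    stopDisj c α β j ↔ β k := by
  induction hj using Nat.decreasingInduction with
  | self =>
    rw [stopDisj]
    split_ifs <;> simp [hk]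
  | of_succ j hj ih =>
    have hnot : ¬ α j := fun h => hj.ne (huniq j (by omega) h)
    rw [stopDisj, if_pos (by omega)]
    simp [hnot, ih]

theorem stopDisj_iff_guarded_disj (c : ℕ) (α β : ℕ → Prop)
    (huniq : ∃ k, k ≤ c ∧ α k ∧ ∀ i, i ≤ c → α i → i = k) :
    stopDisj c α β 0 ↔ (∃ i, i ≤ c ∧ α i ∧ β i) := by
  obtain ⟨k, hkc, hk, hu⟩ := huniq
  rw [stopDisj_iff_of_le hkc hk hu k.zero_le]
  exact ⟨fun h => ⟨k, hkc, hk, h⟩, fun ⟨i, hic, hi, hβ⟩ => hu i hic hi ▸ hβ⟩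
end

section
/- Let c : ℕ and let α β : ℕ → Prop. Suppose there is exactly one index k ≤ c such that α k holds. Then D 0 ↔ β k, where D is the disjunction of β with stopping condition α. -/
theorem stopDisj_iff_of_unique (c : ℕ) (α β : ℕ → Prop) (k : ℕ)
    (hk : k ≤ c) (hαk : α k) (huniq : ∀ i, i ≤ c → α i → i = k) :
    stopDisj c α β 0 ↔ β k := by
  -- Descend from `j = k` to `j = 0`: below `k` the stopping condition fails, so `D j ↔ D (j + 1)`.
  refine Nat.decreasingInduction (motive := fun j _ => stopDisj c α β j ↔ β k) ?_ ?_ (Nat.zero_le k)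
  · intro j hj ih
    have hn : ¬ α j := fun h => hj.ne (huniq j (by omega) h)
    rw [stopDisj, if_pos (by omega)]
    simp [hn, ih]
  · rw [stopDisj]
    split_ifs <;> simp [hαk]
end

section
/- Let c : ℕ and let α β : ℕ → Bool. Define the Boolean stopping-condition disjunction D : ℕ → Bool by D c = (α c && β c) and, for j < c, D j = (α j && β j) || (!(α j) && D (j+1)); define U : Bool as the big disjunction over i ≤ c of (α i && the big conjunction over j ≤ c, j ≠ i, of !(α j)) (expressing 'exactly one of α 0, …, α c is true'); and define G : Bool as the big disjunction over i ≤ c of (α i && β i). Then the Boolean implication U → (D 0 == G) evaluates to true; that is, (!U || (D 0 == G)) = true. -/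
/-!
Suppose `α` holds at exactly one index `i ≤ c`. The stopping recursion started at `0` skips every
index before `i` and stops at `i` with value `β i` (`boolStopDisj_eq_of_first`). In the guarded
disjunction every term other than the `i`-th is false, so its value is `β i` as well.
-/

/-- The Boolean disjunction of `β` with stopping condition `α`, defined by
backwards recursion on `j ≤ c`: `D c = α c && β c`, and for `j < c`,
`D j = (α j && β j) || (!(α j) && D (j+1))`. -/
def boolStopDisj (c : ℕ) (α β : ℕ → Bool) (j : ℕ) : Bool :=
  if j < c then (α j && β j) || (!(α j) && boolStopDisj c α β (j + 1))
  else (α j && β j)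
termination_by c - j
decreasing_by omega

/-- The Boolean sentence expressing that exactly one of `α 0, …, α c` is true:
the big disjunction over `i ≤ c` of `α i` conjoined with the big conjunction,
over `j ≤ c` with `j ≠ i`, of `!(α j)`. -/
def boolUnique (c : ℕ) (α : ℕ → Bool) : Bool :=
  (List.range (c + 1)).any
    (fun i => α i && ((List.range (c + 1)).filter (· ≠ i)).all (fun j => !(α j)))

/-- The ordinary guarded Boolean disjunction `⋁_{i ≤ c} (α i && β i)`. -/
def boolGuardedDisj (c : ℕ) (α β : ℕ → Bool) : Bool :=
  (List.range (c + 1)).any (fun i => α i && β i)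

/-- If `i ≤ c` is an index with `α i` true, and `α` is false at every index before `i`, then the
recursion started at any `k ≤ i` passes through to `i` and stops there with value `β i`. -/
theorem boolStopDisj_eq_of_first (c : ℕ) (α β : ℕ → Bool) (i : ℕ) (hi : i ≤ c)
    (hα : α i = true) (hlt : ∀ j < i, α j = false) (k : ℕ) (hk : k ≤ i) :
    boolStopDisj c α β k = β i := by
  induction hk using Nat.decreasingInduction with
  | self => rw [boolStopDisj]; simp [hα]
  | of_succ k hk ih =>
    rw [boolStopDisj, if_pos (by omega), ih, hlt k hk]
    simp

theorem bool_unique_imp_stopDisj_eq_guarded (c : ℕ) (α β : ℕ → Bool) :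
    (!(boolUnique c α) || (boolStopDisj c α β 0 == boolGuardedDisj c α β)) = true := by
  cases hU : boolUnique c α with
  | false => simp
  | true =>
    -- Both disjunctions equal `β i` at the unique index `i` where `α` holds.
    obtain ⟨i, hi, hα, hne⟩ : ∃ i, i ≤ c ∧ α i = true ∧ ∀ j ≤ c, j ≠ i → α j = false := by
      simpa [boolUnique, Nat.lt_succ_iff, or_iff_not_imp_left] using hU
    have hD : boolStopDisj c α β 0 = β i :=
      boolStopDisj_eq_of_first c α β i hi hα
        (fun j hj => hne j (by omega) (by omega)) 0 (Nat.zero_le i)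
    have hG : boolGuardedDisj c α β = β i := by
      rw [Bool.eq_iff_iff]
      simp only [boolGuardedDisj, List.any_eq_true, List.mem_range, Bool.and_eq_true]
      constructor
      · rintro ⟨j, hj, hαj, hβj⟩
        by_cases hji : j = i
        · rwa [← hji]
        · simp [hne j (by omega) hji] at hαj
      · exact fun hβ => ⟨i, by omega, hα, hβ⟩
    simp [hD, hG]
end
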